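/- Let B be a finite set and k ≥ 2 an integer. Define the quiver Q̊ᵏ with vertex set {v_0, …, v_{k−1}}, and arrows b_{i,j} : v_i → v_j for each b ∈ B and 0 ≤ i < j < k, together with arrows e_{i,j} : v_i → v_j for all i, j ∈ {0, …, k−1}. Let r' be the smallest congruence on Paths Q̊ᵏ such that: (i) any two parallel paths whose arrows all lie in the set A_e = {e_{i,j} | i, j} are r'-related (in particular e_{j,l}·e_{i,j} ~ e_{i,l} and e_{i,i} ~ id_{v_i}); and (ii) for each b ∈ B and 0 ≤ i < j < k, any two parallel paths whose arrows all lie in the set A_{b,i,j} = {e_{0,i} (omitted if i = 0), b_{i,j}, e_{j,k−1} (omitted if j = k−1), b_{0,k−1}} are r'-related (in particular the path e_{0,i} then b_{i,j} then e_{j,k−1} is related to b_{0,k−1}). Then the quotient category (Paths Q̊ᵏ)/r' is equivalent to the free category Paths Q on the quiver Q with one vertex and loop set B (equivalently, to SingleObj of the free monoid on B). -/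

import Mathlib

open CategoryTheory

universe u

/-- The vertices `v_0, …, v_{k-1}` of the quiver `Q̊ᵏ`. -/
structure RingedVertex (B : Type u) (k : ℕ) where
  idx : Fin k

/-- The quiver `Q̊ᵏ`: arrows `b_{i,j} : v_i ⟶ v_j` for `b ∈ B` and `i < j`
(encoded as `Sum.inl (⟨h⟩, b)`), and arrows `e_{i,j} : v_i ⟶ v_j` for all `i, j`
(encoded as `Sum.inr ()`). -/
instance (B : Type u) (k : ℕ) : Quiver (RingedVertex B k) :=
  ⟨fun i j => (PLift (i.idx < j.idx) × B) ⊕ PUnit⟩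

/-- A path lies in a subquiver given by a set of arrows `A` if all of its arrows do. -/
def Quiver.Path.InArrows {V : Type*} [Quiver V] (A : ∀ i j : V, Set (i ⟶ j)) :
    ∀ {u v : V}, Quiver.Path u v → Prop
  | _, _, .nil => True
  | _, _, .cons p f => p.InArrows A ∧ f ∈ A _ _

/-- The set `A_e` of all the arrows `e_{i,j}`. -/
def Ae (B : Type u) (k : ℕ) : ∀ i j : RingedVertex B k, Set (i ⟶ j) :=
  fun _ _ => Set.range Sum.inr

/-- The set `A_{b,i,j} = {e_{0,i} (omitted if i = 0), b_{i,j}, e_{j,k-1} (omitted if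
j = k-1), b_{0,k-1}}`. -/
def Abij (B : Type u) (k : ℕ) (hk : 2 ≤ k) (b : B) (i j : Fin k) :
    ∀ u v : RingedVertex B k, Set (u ⟶ v) := fun u v f =>
  (u.idx = ⟨0, by omega⟩ ∧ v.idx = i ∧ i ≠ ⟨0, by omega⟩ ∧ f ∈ Set.range Sum.inr) ∨
  (u.idx = i ∧ v.idx = j ∧ ∃ h : u.idx < v.idx, f = Sum.inl (PLift.up h, b)) ∨
  (u.idx = j ∧ v.idx = ⟨k - 1, by omega⟩ ∧ j ≠ ⟨k - 1, by omega⟩ ∧ f ∈ Set.range Sum.inr) ∨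
  (u.idx = ⟨0, by omega⟩ ∧ v.idx = ⟨k - 1, by omega⟩ ∧ ∃ h : u.idx < v.idx,
    f = Sum.inl (PLift.up h, b))

/-- The generating relations for the congruence `r'`. -/
def genRel (B : Type u) (k : ℕ) (hk : 2 ≤ k) : HomRel (Paths (RingedVertex B k)) :=
  fun _u _v p q =>
    (Quiver.Path.InArrows (Ae B k) p ∧ Quiver.Path.InArrows (Ae B k) q) ∨
    (∃ (b : B) (i j : Fin k), i < j ∧
      Quiver.Path.InArrows (Abij B k hk b i j) p ∧ Quiver.Path.InArrows (Abij B k hk b i j) q)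

/-!
Reading off labels, `b_{i,j} ↦ b` and `e_{i,j} ↦ 1`, is a functor `L` to the free category on the
loops `B`. It respects the relation on `A_{b,i,j}`: along each arrow of `A_{b,i,j}` the label either
is `1`, with both ends on the same side of the cut between `v_i` and `v_{i+1}`, or is `b`, crossing
the cut. So the words `T_x = 1` before the cut and `T_x = b` after it satisfy `T_x ≫ L p = T_y` for
every path `p` from `x` to `y`, and `L p` is determined by `x` and `y` because the free category is
left cancellative. Conversely `b ↦ b_{0,k-1} ≫ e_{k-1,0}` is a functor `G` with `L G = 1`, and
modulo the relations the isomorphisms `e_{i,0}` are natural from the identity to `G L`, since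
`e_{0,i} ≫ b_{i,j} ≫ e_{j,k-1} = b_{0,k-1}`.
-/

/-- If `r` identifies only morphisms with the same image under `L : C ⥤ D`, and `G : D ⥤ C` is a
quasi-inverse of `L` up to `r`, then `L` induces an equivalence on the quotient. -/
def quotientEquivalence {C D : Type*} [Category* C] [Category* D] {r : HomRel C} {L : C ⥤ D}
    {G : D ⥤ C} (hL : ∀ (x y : C) (f g : x ⟶ y), r f g → L.map f = L.map g)
    (η : Quotient.functor r ≅ L ⋙ G ⋙ Quotient.functor r) (ε : G ⋙ L ≅ 𝟭 D) :
    Quotient r ≌ D :=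
  .mk (CategoryTheory.Quotient.lift r L hL) (G ⋙ Quotient.functor r)
    (Quotient.natIsoLift r (Functor.rightUnitor _ ≪≫ η ≪≫
      Functor.isoWhiskerRight (Quotient.lift.isLift r L hL).symm (G ⋙ Quotient.functor r)))
    (Functor.isoWhiskerLeft G (Quotient.lift.isLift r L hL) ≪≫ ε)

section Paths

variable {V : Type*} [Quiver V] {A : ∀ i j : V, Set (i ⟶ j)}

theorem inArrows_cons {x y z : V} {p : Quiver.Path x y} {f : y ⟶ z} :
    (p.cons f).InArrows A ↔ p.InArrows A ∧ f ∈ A y z := by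
  rw [Quiver.Path.InArrows]

theorem inArrows_nil {x : V} : (Quiver.Path.nil : Quiver.Path x x).InArrows A := by
  rw [Quiver.Path.InArrows]
  trivial

theorem inArrows_toPath {x y : V} {f : x ⟶ y} (hf : f ∈ A x y) : f.toPath.InArrows A :=
  inArrows_cons.2 ⟨inArrows_nil, hf⟩

theorem inArrows_comp {x y z : V} {p : Quiver.Path x y} {q : Quiver.Path y z}
    (hp : p.InArrows A) (hq : q.InArrows A) : (p.comp q).InArrows A := by
  induction q with
  | nil => exact hp
  | cons q f ih =>
    obtain ⟨hq, hf⟩ := inArrows_cons.1 hq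
    exact inArrows_cons.2 ⟨ih hq, hf⟩

instance epi_of_paths {x y : Paths V} (p : x ⟶ y) : Epi p :=
  ⟨fun _ _ h => Quiver.Path.comp_injective_right p h⟩

variable {C : Type*} [Category* C] {Φ : Paths V ⥤ C} {c : C} {T : ∀ x : Paths V, c ⟶ Φ.obj x}

theorem comp_map_of_inArrows
    (hT : ∀ (x y : V) (f : x ⟶ y), f ∈ A x y →
      T ((Paths.of V).obj x) ≫ Φ.map ((Paths.of V).map f) = T ((Paths.of V).obj y))
    {x y : Paths V} {p : x ⟶ y} (hp : Quiver.Path.InArrows A p) :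
    T x ≫ Φ.map p = T y := by
  induction p using Paths.induction_fixed_source with
  | id => rw [Φ.map_id, Category.comp_id]
  | comp p f ih =>
    obtain ⟨hp, hf⟩ := inArrows_cons.1 hp
    rw [Φ.map_comp, ← Category.assoc, ih hp, hT _ _ f hf]

theorem map_eq_of_inArrows [∀ x, Epi (T x)]
    (hT : ∀ (x y : V) (f : x ⟶ y), f ∈ A x y →
      T ((Paths.of V).obj x) ≫ Φ.map ((Paths.of V).map f) = T ((Paths.of V).obj y))
    {x y : Paths V} {p q : x ⟶ y} (hp : Quiver.Path.InArrows A p)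
    (hq : Quiver.Path.InArrows A q) : Φ.map p = Φ.map q := by
  rw [← cancel_epi (T x), comp_map_of_inArrows hT hp, comp_map_of_inArrows hT hq]

end Paths

namespace RingedVertex

variable {B : Type u} {k : ℕ}

/-- The arrow `e_{i,j}`, as a morphism of the free category. -/
def eHom (x y : Paths (RingedVertex B k)) : x ⟶ y :=
  (Paths.of (RingedVertex B k)).map (Sum.inr ⟨⟩)

/-- The arrow `b_{i,j}`, as a morphism of the free category. -/
def bHom (b : B) {x y : Paths (RingedVertex B k)} (h : x.idx < y.idx) : x ⟶ y :=
  (Paths.of (RingedVertex B k)).map (Sum.inl (⟨h⟩, b))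

/-- The vertex `v_0`. -/
def first (B : Type u) (hk : 2 ≤ k) : Paths (RingedVertex B k) :=
  RingedVertex.mk ⟨0, by omega⟩

/-- The vertex `v_{k-1}`. -/
def last (B : Type u) (hk : 2 ≤ k) : Paths (RingedVertex B k) :=
  RingedVertex.mk ⟨k - 1, by omega⟩

theorem first_idx_lt_last_idx (hk : 2 ≤ k) : (first B hk).idx < (last B hk).idx :=
  Fin.mk_lt_mk.2 (by omega)

/-- The object of the free category on one vertex. -/
abbrev point (B : Type u) : Paths (Quiver.SingleObj B) := Quiver.SingleObj.star B

/-- The loop `b` of the one-vertex quiver, as a morphism of its free category. -/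
def loop (b : B) : point B ⟶ point B :=
  (Paths.of (Quiver.SingleObj B)).map b

/-- The label of an arrow: `b` for `b_{i,j}` and the identity for `e_{i,j}`. -/
abbrev label (B : Type u) (k : ℕ) : RingedVertex B k ⥤q Paths (Quiver.SingleObj B) where
  obj _ := point B
  map f := f.elim (fun hb => loop hb.2) (fun _ => 𝟙 (point B))

/-- The functor sending a path to the word of its labels. Its action on objects is overridden so
that it unfolds to `point B` reducibly, which rewriting with `Category.id_comp` and the like
needs. -/
@[reducible]
def labelFunctor (B : Type u) (k : ℕ) : Paths (RingedVertex B k) ⥤ Paths (Quiver.SingleObj B) :=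
  { Paths.lift (label B k) with obj := fun _ => point B }

theorem labelFunctor_map_eHom (x y : Paths (RingedVertex B k)) :
    (labelFunctor B k).map (eHom x y) = 𝟙 _ :=
  Paths.lift_toPath (label B k) _

theorem labelFunctor_map_bHom (b : B) {x y : Paths (RingedVertex B k)} (h : x.idx < y.idx) :
    (labelFunctor B k).map (bHom b h) = loop b :=
  Paths.lift_toPath (label B k) _

/-- The word `1` at the vertices up to `v_i`, and `b` beyond: the components of a cone over the
labels of the arrows in `A_{b,i,j}`, for every `j > i`. -/
def threshold (b : B) (i : Fin k) (x : Paths (RingedVertex B k)) :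
    point B ⟶ (labelFunctor B k).obj x :=
  if x.idx ≤ i then 𝟙 (point B) else loop b

theorem threshold_of_le (b : B) {i : Fin k} {x : Paths (RingedVertex B k)} (h : x.idx ≤ i) :
    threshold b i x = 𝟙 (point B) :=
  if_pos h

theorem threshold_of_lt (b : B) {i : Fin k} {x : Paths (RingedVertex B k)} (h : i < x.idx) :
    threshold b i x = loop b :=
  if_neg h.not_ge

theorem threshold_comp_labelFunctor_map_eHom (b : B) {i : Fin k}
    {x y : Paths (RingedVertex B k)} (h : x.idx ≤ i ↔ y.idx ≤ i) :
    threshold b i x ≫ (labelFunctor B k).map (eHom x y) = threshold b i y := by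
  rw [labelFunctor_map_eHom, Category.comp_id]
  exact if_congr h rfl rfl

theorem threshold_comp_labelFunctor_map_bHom (b : B) {i : Fin k}
    {x y : Paths (RingedVertex B k)} (hx : x.idx ≤ i) (hy : i < y.idx) :
    threshold b i x ≫ (labelFunctor B k).map (bHom b (hx.trans_lt hy)) = threshold b i y := by
  rw [labelFunctor_map_bHom, threshold_of_le b hx, threshold_of_lt b hy, Category.id_comp]

variable {hk : 2 ≤ k}

theorem threshold_comp_labelFunctor_map {b : B} {i j : Fin k} (hij : i < j)
    {x y : RingedVertex B k} {f : x ⟶ y} (hf : f ∈ Abij B k hk b i j x y) :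
    threshold b i x ≫ (labelFunctor B k).map ((Paths.of _).map f) = threshold b i y := by
  have first_le : (⟨0, by omega⟩ : Fin k) ≤ i := Fin.mk_le_of_le_val (Nat.zero_le _)
  have lt_last : i < ⟨k - 1, by omega⟩ := Fin.mk_lt_mk.2 (by omega)
  rcases hf with ⟨hx, hy, -, _, rfl⟩ | ⟨hx, hy, h, rfl⟩ | ⟨hx, hy, -, _, rfl⟩ | ⟨hx, hy, h, rfl⟩
  · exact threshold_comp_labelFunctor_map_eHom b (iff_of_true (hx.trans_le first_le) hy.le)
  · exact threshold_comp_labelFunctor_map_bHom b hx.le (hij.trans_eq hy.symm)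
  · exact threshold_comp_labelFunctor_map_eHom b
      (iff_of_false (hij.trans_eq hx.symm).not_ge (lt_last.trans_eq hy.symm).not_ge)
  · exact threshold_comp_labelFunctor_map_bHom b (hx.trans_le first_le) (lt_last.trans_eq hy.symm)

theorem labelFunctor_map_eq_of_genRel {x y : Paths (RingedVertex B k)} {p q : x ⟶ y}
    (h : genRel B k hk p q) : (labelFunctor B k).map p = (labelFunctor B k).map q := by
  rcases h with ⟨hp, hq⟩ | ⟨b, i, j, hij, hp, hq⟩
  · refine map_eq_of_inArrows (T := fun x => 𝟙 ((labelFunctor B k).obj x)) ?_ hp hq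
    rintro x y _ ⟨_, rfl⟩
    exact (Category.id_comp _).trans (labelFunctor_map_eHom x y)
  · exact map_eq_of_inArrows (T := threshold b i)
      (fun _ _ _ hf => threshold_comp_labelFunctor_map hij hf) hp hq

/-- The round trip `b_{0,k-1}`, `e_{k-1,0}` based at `v_0`. -/
abbrev loopArrow (B : Type u) (hk : 2 ≤ k) : Quiver.SingleObj B ⥤q Paths (RingedVertex B k) where
  obj _ := first B hk
  map b := bHom b (first_idx_lt_last_idx hk) ≫ eHom (last B hk) (first B hk)

/-- The functor sending the loop `b` to `b_{0,k-1}` followed by `e_{k-1,0}`; it becomes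
quasi-inverse to `labelFunctor` modulo the generating relations. Its action on objects is overridden
as in `labelFunctor`. -/
@[reducible]
def loopFunctor (B : Type u) (hk : 2 ≤ k) :
    Paths (Quiver.SingleObj B) ⥤ Paths (RingedVertex B k) :=
  { Paths.lift (loopArrow B hk) with obj := fun _ => first B hk }

theorem loopFunctor_map_loop (b : B) : (loopFunctor B hk).map (loop b) =
    bHom b (first_idx_lt_last_idx hk) ≫ eHom (last B hk) (first B hk) :=
  Paths.lift_toPath _ _

theorem labelFunctor_map_loopFunctor_map_loop (b : B) :
    (labelFunctor B k).map ((loopFunctor B hk).map (loop b)) = loop b := by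
  rw [loopFunctor_map_loop, Functor.map_comp, labelFunctor_map_bHom, labelFunctor_map_eHom,
    Category.comp_id]

/-- Labelling the word spelled out at `v_0` gives the word back. -/
def loopLabelIso (B : Type u) (hk : 2 ≤ k) : loopFunctor B hk ⋙ labelFunctor B k ≅ 𝟭 _ :=
  Paths.liftNatIso (fun _ => Iso.refl (point B)) fun b =>
    (Category.comp_id _).trans
      ((labelFunctor_map_loopFunctor_map_loop b).trans (Category.id_comp (loop b)).symm)

section

variable {C : Type*} [Category* C] {Φ : Paths (RingedVertex B k) ⥤ C}
  (hΦ : ∀ ⦃x y : Paths (RingedVertex B k)⦄ ⦃p q : x ⟶ y⦄, genRel B k hk p q → Φ.map p = Φ.map q)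

include hΦ

theorem map_eHom_self (x : Paths (RingedVertex B k)) : Φ.map (eHom x x) = 𝟙 (Φ.obj x) := by
  rw [← Φ.map_id]
  exact hΦ (.inl ⟨inArrows_toPath ⟨_, rfl⟩, inArrows_nil⟩)

theorem map_eHom_comp_map_eHom (x y z : Paths (RingedVertex B k)) :
    Φ.map (eHom x y) ≫ Φ.map (eHom y z) = Φ.map (eHom x z) := by
  rw [← Φ.map_comp]
  exact hΦ (.inl ⟨inArrows_comp (inArrows_toPath ⟨_, rfl⟩) (inArrows_toPath ⟨_, rfl⟩),
    inArrows_toPath ⟨_, rfl⟩⟩)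

theorem exists_inArrows_map_eq_map_eHom_first (b : B) (x : Paths (RingedVertex B k)) (j : Fin k) :
    ∃ p : first B hk ⟶ x,
      Quiver.Path.InArrows (Abij B k hk b x.idx j) p ∧ Φ.map p = Φ.map (eHom (first B hk) x) := by
  by_cases hx : x.idx = (first B hk).idx
  · obtain rfl : x = first B hk := congrArg RingedVertex.mk hx
    exact ⟨𝟙 _, inArrows_nil, by rw [map_eHom_self hΦ, Φ.map_id]⟩
  · exact ⟨eHom _ x, inArrows_toPath (.inl ⟨rfl, rfl, hx, _, rfl⟩), rfl⟩

theorem exists_inArrows_map_eq_map_eHom_last (b : B) (x : Paths (RingedVertex B k)) (i : Fin k) :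
    ∃ p : x ⟶ last B hk,
      Quiver.Path.InArrows (Abij B k hk b i x.idx) p ∧ Φ.map p = Φ.map (eHom x (last B hk)) := by
  by_cases hx : x.idx = (last B hk).idx
  · obtain rfl : x = last B hk := congrArg RingedVertex.mk hx
    exact ⟨𝟙 _, inArrows_nil, by rw [map_eHom_self hΦ, Φ.map_id]⟩
  · exact ⟨eHom x _, inArrows_toPath (.inr (.inr (.inl ⟨rfl, rfl, hx, _, rfl⟩))), rfl⟩

theorem map_eHom_comp_map_bHom_comp_map_eHom (b : B) {x y : Paths (RingedVertex B k)}
    (h : x.idx < y.idx) :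
    Φ.map (eHom (first B hk) x) ≫ Φ.map (bHom b h) ≫ Φ.map (eHom y (last B hk)) =
      Φ.map (bHom b (first_idx_lt_last_idx hk)) := by
  obtain ⟨p, hp, hp'⟩ := exists_inArrows_map_eq_map_eHom_first hΦ b x y.idx
  obtain ⟨q, hq, hq'⟩ := exists_inArrows_map_eq_map_eHom_last hΦ b y x.idx
  rw [← hp', ← hq', ← Φ.map_comp, ← Φ.map_comp]
  refine hΦ (.inr ⟨b, x.idx, y.idx, h, inArrows_comp hp (inArrows_comp ?_ hq), ?_⟩)
  · exact inArrows_toPath (.inr (.inl ⟨rfl, rfl, h, rfl⟩))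
  · exact inArrows_toPath (.inr (.inr (.inr ⟨rfl, rfl, first_idx_lt_last_idx hk, rfl⟩)))

theorem map_bHom_comp_map_eHom_first (b : B) {x y : Paths (RingedVertex B k)} (h : x.idx < y.idx) :
    Φ.map (bHom b h) ≫ Φ.map (eHom y (first B hk)) =
      Φ.map (eHom x (first B hk)) ≫ Φ.map ((loopFunctor B hk).map (loop b)) := by
  symm
  calc Φ.map (eHom x (first B hk)) ≫ Φ.map ((loopFunctor B hk).map (loop b))
    _ = Φ.map (eHom x (first B hk)) ≫
          (Φ.map (eHom (first B hk) x) ≫ Φ.map (bHom b h) ≫ Φ.map (eHom y (last B hk))) ≫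
            Φ.map (eHom (last B hk) (first B hk)) := by
      rw [map_eHom_comp_map_bHom_comp_map_eHom hΦ, loopFunctor_map_loop, Φ.map_comp]
    _ = (Φ.map (eHom x (first B hk)) ≫ Φ.map (eHom (first B hk) x)) ≫ Φ.map (bHom b h) ≫
          Φ.map (eHom y (last B hk)) ≫ Φ.map (eHom (last B hk) (first B hk)) := by
      simp only [Category.assoc]
    _ = Φ.map (bHom b h) ≫ Φ.map (eHom y (first B hk)) := by
      rw [map_eHom_comp_map_eHom hΦ, map_eHom_comp_map_eHom hΦ, map_eHom_self hΦ,
        Category.id_comp]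

/-- The inverse isomorphisms represented by `e_{i,j}` and `e_{j,i}`. -/
def mapEIso (x y : Paths (RingedVertex B k)) : Φ.obj x ≅ Φ.obj y where
  hom := Φ.map (eHom x y)
  inv := Φ.map (eHom y x)
  hom_inv_id := by rw [map_eHom_comp_map_eHom hΦ, map_eHom_self hΦ]
  inv_hom_id := by rw [map_eHom_comp_map_eHom hΦ, map_eHom_self hΦ]

theorem map_eHom_comp_map_eHom_first (x y : Paths (RingedVertex B k)) :
    Φ.map (eHom x y) ≫ Φ.map (eHom y (first B hk)) =
      Φ.map (eHom x (first B hk)) ≫ Φ.map ((loopFunctor B hk).map (𝟙 (point B))) := by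
  rw [(loopFunctor B hk).map_id, Φ.map_id, Category.comp_id, map_eHom_comp_map_eHom hΦ]

/-- Conjugation by the `e_{i,0}` moves every morphism to a word spelled out at `v_0`. -/
def isoLabelLoop : Φ ≅ labelFunctor B k ⋙ loopFunctor B hk ⋙ Φ :=
  Paths.liftNatIso (fun x => mapEIso hΦ x (first B hk)) fun {x y} f => by
    rcases f with ⟨⟨h⟩, b⟩ | ⟨⟩
    · exact map_bHom_comp_map_eHom_first hΦ b h
    · exact map_eHom_comp_map_eHom_first hΦ x y

end

end RingedVertex

theorem quotient_ringed_equiv_free_general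
    (B : Type u) (k : ℕ) (hk : 2 ≤ k)
    (r' : HomRel (Paths (RingedVertex B k)))
    (hgen : ∀ (u v : Paths (RingedVertex B k)) (p q : u ⟶ v), genRel B k hk p q → r' p q)
    (hmin : ∀ s : HomRel (Paths (RingedVertex B k)), Congruence s →
      (∀ (u v : Paths (RingedVertex B k)) (p q : u ⟶ v), genRel B k hk p q → s p q) →
      ∀ (u v : Paths (RingedVertex B k)) (p q : u ⟶ v), r' p q → s p q) :
    Nonempty (CategoryTheory.Quotient r' ≌ Paths (Quiver.SingleObj B)) :=
  ⟨quotientEquivalence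
    (hmin _ (Functor.congruence_homRel _) fun _ _ _ _ => RingedVertex.labelFunctor_map_eq_of_genRel)
    (RingedVertex.isoLabelLoop fun _ _ _ _ h => CategoryTheory.Quotient.sound r' (hgen _ _ _ _ h))
    (RingedVertex.loopLabelIso B hk)⟩

/-- the quotient of the free category on `Q̊ᵏ` by the smallest congruence
relating parallel paths supported on `A_e` and parallel paths supported on each `A_{b,i,j}`
is equivalent to the free category on the one-vertex quiver with loop set `B`. -/
theorem quotient_ringed_equiv_free
    (B : Type u) [Fintype B] (k : ℕ) (hk : 2 ≤ k)
    (r' : HomRel (Paths (RingedVertex B k)))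
    -- `r'` is a congruence ...
    (hcong : Congruence r')
    -- ... containing the generating relations ...
    (hgen : ∀ (u v : Paths (RingedVertex B k)) (p q : u ⟶ v), genRel B k hk p q → r' p q)
    -- ... and is the smallest such congruence.
    (hmin : ∀ s : HomRel (Paths (RingedVertex B k)), Congruence s →
      (∀ (u v : Paths (RingedVertex B k)) (p q : u ⟶ v), genRel B k hk p q → s p q) →
      ∀ (u v : Paths (RingedVertex B k)) (p q : u ⟶ v), r' p q → s p q) :
    Nonempty (CategoryTheory.Quotient r' ≌ Paths (Quiver.SingleObj B)) :=
  quotient_ringed_equiv_free_general B k hk r' hgen hmin
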